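/- arXiv:1903.11582 — 2 statements merged into one kernel-verified Lean document; each statement's English description precedes it below -/
import Mathlib

section
/- Let F_y be a probability distribution on ℝ and F_λ a probability distribution on [0,∞), both with finite second moments. Then there exists a function η : ℝ → ℝ (depending only on F_y and F_λ) which is odd (η(−t) = −η(t) for all t) and satisfies 0 ≤ η(t₁) − η(t₂) ≤ t₁ − t₂ for all t₁ ≥ t₂, such that for every pair of converging sequences y⁽ᵖ⁾ ∈ ℝᵖ and λ⁽ᵖ⁾ ∈ ℝᵖ (each λ⁽ᵖ⁾ having nonnegative nondecreasing entries) whose empirical measures converge weakly to F_y and F_λ respectively and which satisfy (1/p)‖y⁽ᵖ⁾‖² → E_{F_y}[Y²] and (1/p)‖λ⁽ᵖ⁾‖² → E_{F_λ}[λ²], one has (1/p)‖Prox_{λ⁽ᵖ⁾}(y⁽ᵖ⁾) − η(y⁽ᵖ⁾)‖² → 0 as p → ∞, where η(y⁽ᵖ⁾) denotes the coordinatewise application of η. -/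
open MeasureTheory Filter Finset Topology

/-- The nondecreasing rearrangement of the absolute values of the entries of `x`. -/
noncomputable def sortedAbs {p : ℕ} (x : Fin p → ℝ) : Fin p → ℝ :=
  fun i => |x (Tuple.sort (fun j => |x j|) i)|

/-- The sorted ℓ1 norm `J_λ(x) = ∑ λ_i |x|_(i)`. -/
noncomputable def sortedL1 {p : ℕ} (lam x : Fin p → ℝ) : ℝ :=
  ∑ i, lam i * sortedAbs x i

/-- The SLOPE objective `(1/2)‖y - x‖² + J_λ(x)`. -/
noncomputable def slopeObj {p : ℕ} (lam y x : Fin p → ℝ) : ℝ :=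
  (1 / 2) * ∑ i, (y i - x i) ^ 2 + sortedL1 lam x

open Classical in
/-- The SLOPE proximal operator: the (unique) minimizer of the SLOPE objective. -/
noncomputable def slopeProx {p : ℕ} (lam y : Fin p → ℝ) : Fin p → ℝ :=
  if h : ∃ x : Fin p → ℝ, ∀ z : Fin p → ℝ, slopeObj lam y x ≤ slopeObj lam y z
  then h.choose else y

/-- The empirical measures `(1/p) ∑ δ_{x_i}` of the sequence of vectors `x⁽ᵖ⁾` converge
weakly to the probability measure `μ` (tested against bounded continuous functions). -/
def EmpConverges (x : (p : ℕ) → Fin p → ℝ) (μ : Measure ℝ) : Prop :=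
  ∀ f : BoundedContinuousFunction ℝ ℝ,
    Tendsto (fun p => (∑ i, f (x p i)) / (p : ℝ)) atTop (𝓝 (∫ t, f t ∂μ))

/-!
For `λ` nonnegative and nondecreasing, exchanging two entries of the argument or flipping a sign
leaves `J_λ` unchanged. Comparing `Prox_λ(y)` with such competitors shows that it equals `η(y)` for
some odd, nondecreasing, 1-Lipschitz `η` (a *shrinkage*).

For a shrinkage `η`, the value of the SLOPE objective at `η(y)`, divided by `p`, depends only on the
sorted `|y|` and `λ`: it is the expectation of `½(a - η a)² + l η a` when the pair `(a, l)` is the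
comonotone coupling, through quantile functions, of the empirical measures of `|y|` and `λ`. This
integrand is Lipschitz in `(a, l)` with a linearly growing constant that does not depend on `η`,
and the quantile functions converge in `L²`, so the normalized objectives converge uniformly over
shrinkages to a risk `R`. Shrinkages form a compact set, hence `R` has a minimizer `η`. Since the
prox is itself a shrinkage of `y`, `η(y)` is almost optimal for the normalized objective, and strong
convexity turns this into `(1/p)‖Prox_λ(y) - η(y)‖² → 0`.
-/

section Proximal

variable {ι : Type*} [Fintype ι] {g : (ι → ℝ) → ℝ} {y x : ι → ℝ}

/-- The objective `½‖y - x‖² + g x` whose minimizers are the proximal points of `y`; the norm is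
Euclidean, written as a sum because `ι → ℝ` carries the sup norm. -/
noncomputable def proxObj (g : (ι → ℝ) → ℝ) (y x : ι → ℝ) : ℝ :=
  1 / 2 * ∑ i, (y i - x i) ^ 2 + g x

lemma sum_sub_lineMap_sq (y x z : ι → ℝ) (t : ℝ) :
    ∑ i, (y i - AffineMap.lineMap x z t i) ^ 2
      = (1 - t) * ∑ i, (y i - x i) ^ 2 + t * ∑ i, (y i - z i) ^ 2
        - t * (1 - t) * ∑ i, (x i - z i) ^ 2 := by
  simp only [mul_sum, ← sum_add_distrib, ← sum_sub_distrib, AffineMap.lineMap_apply_module,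
    Pi.add_apply, Pi.smul_apply, smul_eq_mul]
  exact sum_congr rfl fun i _ => by ring

lemma proxObj_lineMap_le (hg : ConvexOn ℝ Set.univ g) (y x z : ι → ℝ) {t : ℝ}
    (ht : t ∈ Set.Icc (0 : ℝ) 1) :
    proxObj g y (AffineMap.lineMap x z t) ≤ (1 - t) * proxObj g y x + t * proxObj g y z
      - t * (1 - t) * (1 / 2 * ∑ i, (x i - z i) ^ 2) := by
  have hconv := hg.2 (Set.mem_univ x) (Set.mem_univ z) (sub_nonneg.2 ht.2) ht.1
    (sub_add_cancel 1 t)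
  rw [← AffineMap.lineMap_apply_module, smul_eq_mul, smul_eq_mul] at hconv
  rw [proxObj, proxObj, proxObj, sum_sub_lineMap_sq]
  linarith

lemma proxObj_add_half_sum_sq_le (hg : ConvexOn ℝ Set.univ g)
    (hx : ∀ z, proxObj g y x ≤ proxObj g y z) (z : ι → ℝ) :
    proxObj g y x + 1 / 2 * ∑ i, (x i - z i) ^ 2 ≤ proxObj g y z := by
  set D := 1 / 2 * ∑ i, (x i - z i) ^ 2 with hD
  have hslope : ∀ t ∈ Set.Ioc (0 : ℝ) 1, proxObj g y x + (1 - t) * D ≤ proxObj g y z := by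
    intro t ht
    have h := (hx _).trans (proxObj_lineMap_le hg y x z (Set.Ioc_subset_Icc_self ht))
    rw [← hD] at h
    refine le_of_mul_le_mul_left ?_ ht.1
    linarith
  have hlim : Tendsto (fun t : ℝ => proxObj g y x + (1 - t) * D) (𝓝[>] 0)
      (𝓝 (proxObj g y x + (1 - 0) * D)) :=
    (Continuous.tendsto (by fun_prop) 0).mono_left nhdsWithin_le_nhds
  rw [sub_zero, one_mul] at hlim
  exact le_of_tendsto hlim (eventually_of_mem (Ioc_mem_nhdsGT one_pos) hslope)

lemma sum_sub_mul_sub_nonpos_of_le (hg : ConvexOn ℝ Set.univ g)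
    (hx : ∀ z, proxObj g y x ≤ proxObj g y z) {z : ι → ℝ} (hz : g z ≤ g x) :
    ∑ i, (x i - z i) * (x i - y i) ≤ 0 := by
  have hgrowth := proxObj_add_half_sum_sq_le hg hx z
  have hexpand : ∑ i, (y i - z i) ^ 2 = ∑ i, (y i - x i) ^ 2 + ∑ i, (x i - z i) ^ 2
      - 2 * ∑ i, (x i - z i) * (x i - y i) := by
    rw [mul_sum, ← sum_add_distrib, ← sum_sub_distrib]
    exact sum_congr rfl fun i _ => by ring
  simp only [proxObj] at hgrowth
  linarith

lemma exists_forall_proxObj_le (hcont : Continuous g) (hnonneg : ∀ z, 0 ≤ g z) (y : ι → ℝ) :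
    ∃ x, ∀ z, proxObj g y x ≤ proxObj g y z := by
  have hobj : Continuous (proxObj g y) := by unfold proxObj; fun_prop
  refine hobj.exists_forall_le' y ?_
  have hball := (isCompact_closedBall y √(2 * proxObj g y y)).compl_mem_cocompact
  filter_upwards [hball] with z hz
  contrapose! hz
  rw [Set.notMem_compl_iff, Metric.mem_closedBall, dist_pi_le_iff (Real.sqrt_nonneg _)]
  intro i
  rw [dist_comm, Real.dist_eq]
  refine Real.abs_le_sqrt ?_
  have hcoord : (y i - z i) ^ 2 ≤ ∑ j, (y j - z j) ^ 2 :=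
    single_le_sum (f := fun j => (y j - z j) ^ 2) (fun _ _ => sq_nonneg _) (mem_univ i)
  have hgz := hnonneg z
  have hlt : 1 / 2 * ∑ j, (y j - z j) ^ 2 + g z < proxObj g y y := hz
  linarith

end Proximal

section SortedL1

variable {p : ℕ} {lam : Fin p → ℝ}

lemma sortedAbs_nonneg (x : Fin p → ℝ) (i : Fin p) : 0 ≤ sortedAbs x i :=
  abs_nonneg _

lemma monotone_sortedAbs (x : Fin p → ℝ) : Monotone (sortedAbs x) :=
  Tuple.monotone_sort fun j => |x j|

lemma sum_comp_sortedAbs (f : ℝ → ℝ) (x : Fin p → ℝ) :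
    ∑ i, f (sortedAbs x i) = ∑ i, f |x i| :=
  Equiv.sum_comp (Tuple.sort fun j => |x j|) fun i => f |x i|

lemma sortedL1_nonneg (hlam : ∀ i, 0 ≤ lam i) (x : Fin p → ℝ) : 0 ≤ sortedL1 lam x :=
  sum_nonneg fun i _ => mul_nonneg (hlam i) (sortedAbs_nonneg x i)

lemma sum_mul_abs_comp_perm_le_sortedL1 (hmono : Monotone lam) (x : Fin p → ℝ)
    (σ : Equiv.Perm (Fin p)) : ∑ i, lam i * |x (σ i)| ≤ sortedL1 lam x := by
  have hrearrange := (hmono.monovary (monotone_sortedAbs x)).sum_mul_comp_perm_le_sum_mul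
    (σ := σ.trans (Tuple.sort fun j => |x j|).symm)
  simpa [sortedAbs, sortedL1] using hrearrange

lemma sortedL1_le_of_abs_eq_abs_comp_perm (hmono : Monotone lam) {x x' : Fin p → ℝ}
    (σ : Equiv.Perm (Fin p)) (h : ∀ k, |x' k| = |x (σ k)|) :
    sortedL1 lam x' ≤ sortedL1 lam x := by
  have hle := sum_mul_abs_comp_perm_le_sortedL1 hmono x ((Tuple.sort fun j => |x' j|).trans σ)
  simpa [sortedL1, sortedAbs, h] using hle

lemma convexOn_sortedL1 (hlam : ∀ i, 0 ≤ lam i) (hmono : Monotone lam) :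
    ConvexOn ℝ Set.univ (sortedL1 lam) := by
  refine ⟨convex_univ, fun x _ z _ a b ha hb _ => ?_⟩
  set σ := Tuple.sort fun j => |(a • x + b • z) j|
  calc ∑ i, lam i * |a * x (σ i) + b * z (σ i)|
      ≤ ∑ i, lam i * (a * |x (σ i)| + b * |z (σ i)|) := by
        refine sum_le_sum fun i _ => mul_le_mul_of_nonneg_left ?_ (hlam i)
        simpa only [abs_mul, abs_of_nonneg ha, abs_of_nonneg hb] using
          abs_add_le (a * x (σ i)) (b * z (σ i))
    _ = a * ∑ i, lam i * |x (σ i)| + b * ∑ i, lam i * |z (σ i)| := by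
        rw [mul_sum, mul_sum, ← sum_add_distrib]
        exact sum_congr rfl fun i _ => by ring
    _ ≤ a • sortedL1 lam x + b • sortedL1 lam z := by
        simp only [smul_eq_mul]
        gcongr <;> exact sum_mul_abs_comp_perm_le_sortedL1 hmono _ σ

lemma continuous_sortedL1 (hlam : ∀ i, 0 ≤ lam i) (hmono : Monotone lam) :
    Continuous (sortedL1 lam) :=
  continuousOn_univ.1 ((convexOn_sortedL1 hlam hmono).continuousOn isOpen_univ)

lemma slopeObj_slopeProx_le (hlam : ∀ i, 0 ≤ lam i) (hmono : Monotone lam) (y z : Fin p → ℝ) :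
    slopeObj lam y (slopeProx lam y) ≤ slopeObj lam y z := by
  have hmin : ∃ x, ∀ z, slopeObj lam y x ≤ slopeObj lam y z :=
    exists_forall_proxObj_le (continuous_sortedL1 hlam hmono) (sortedL1_nonneg hlam) y
  rw [slopeProx, dif_pos hmin]
  exact hmin.choose_spec z

lemma slopeObj_slopeProx_add_half_sum_sq_le (hlam : ∀ i, 0 ≤ lam i) (hmono : Monotone lam)
    (y z : Fin p → ℝ) :
    slopeObj lam y (slopeProx lam y) + 1 / 2 * ∑ i, (slopeProx lam y i - z i) ^ 2
      ≤ slopeObj lam y z :=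
  proxObj_add_half_sum_sq_le (convexOn_sortedL1 hlam hmono) (slopeObj_slopeProx_le hlam hmono y) z

/-- The competitor exchanges the `i`-th and `j`-th coordinates up to the sign `e`, which does not
change the sorted ℓ1 norm. -/
lemma sq_slopeProx_sub_le (hlam : ∀ i, 0 ≤ lam i) (hmono : Monotone lam) (y : Fin p → ℝ)
    (i j : Fin p) {e : ℝ} (he : |e| = 1) :
    (slopeProx lam y i - e * slopeProx lam y j) ^ 2
      ≤ (slopeProx lam y i - e * slopeProx lam y j) * (y i - e * y j) := by
  set x := slopeProx lam y
  set z := Function.update (Function.update x j (e * x i)) i (e * x j) with hz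
  have he2 : e * e = 1 := by rw [← abs_mul_abs_self, he, one_mul]
  have hzx : sortedL1 lam z ≤ sortedL1 lam x := by
    refine sortedL1_le_of_abs_eq_abs_comp_perm hmono (Equiv.swap i j) fun k => ?_
    rw [hz]
    rcases eq_or_ne k i with rfl | hki
    · simp [abs_mul, he]
    · rcases eq_or_ne k j with rfl | hkj
      · simp [abs_mul, he, hki]
      · simp [hki, hkj, Equiv.swap_apply_of_ne_of_ne]
  have hopt := sum_sub_mul_sub_nonpos_of_le (convexOn_sortedL1 hlam hmono)
    (slopeObj_slopeProx_le hlam hmono y) hzx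
  have hoff : ∀ k ∉ ({i, j} : Finset (Fin p)), (x k - z k) * (x k - y k) = 0 := by
    intro k hk
    rw [mem_insert, mem_singleton, not_or] at hk
    simp [hz, hk.1, hk.2]
  rw [← sum_subset (subset_univ {i, j}) fun k _ hk => hoff k hk] at hopt
  have hzi : z i = e * x j := by simp [hz]
  rcases eq_or_ne i j with rfl | hij
  · rw [pair_eq_singleton, sum_singleton, hzi] at hopt
    have hscaled := mul_nonpos_of_nonneg_of_nonpos
      (sub_nonneg.2 ((le_abs_self e).trans he.le)) hopt
    linarith
  · have hzj : z j = e * x i := by simp [hz, hij.symm]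
    have hfactor : x j - e * x i = -e * (x i - e * x j) := by linear_combination -x j * he2
    rw [sum_pair hij, hzi, hzj, hfactor] at hopt
    linarith

end SortedL1

section Shrinkage

/-- Odd nondecreasing 1-Lipschitz functions: the possible coordinatewise actions of a SLOPE
proximal operator. -/
structure IsShrinkage (η : ℝ → ℝ) : Prop where
  odd : Function.Odd η
  mono : Monotone η
  lipschitz : LipschitzWith 1 η

namespace IsShrinkage

variable {η : ℝ → ℝ}

lemma map_zero (h : IsShrinkage η) : η 0 = 0 :=
  h.odd.map_zero

lemma abs_sub_le (h : IsShrinkage η) (s t : ℝ) : |η s - η t| ≤ |s - t| := by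
  simpa [Real.dist_eq] using h.lipschitz.dist_le_mul s t

lemma abs_le (h : IsShrinkage η) (t : ℝ) : |η t| ≤ |t| := by
  simpa [h.map_zero] using h.abs_sub_le t 0

lemma sub_le_sub (h : IsShrinkage η) {s t : ℝ} (hst : s ≤ t) : η t - η s ≤ t - s := by
  simpa [abs_of_nonneg, hst, h.mono hst] using h.abs_sub_le t s

lemma abs_residual_sub_le (h : IsShrinkage η) (s t : ℝ) :
    |(s - η s) - (t - η t)| ≤ |s - t| := by
  wlog hst : s ≤ t generalizing s t
  · rw [abs_sub_comm, abs_sub_comm s]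
    exact this t s (le_of_not_ge hst)
  rw [abs_sub_comm, abs_sub_comm s, abs_of_nonneg (by linarith [h.sub_le_sub hst]),
    abs_of_nonneg (sub_nonneg.2 hst)]
  linarith [h.mono hst]

lemma abs_residual_le (h : IsShrinkage η) (t : ℝ) : |t - η t| ≤ |t| := by
  simpa [h.map_zero] using h.abs_residual_sub_le t 0

lemma abs_map (h : IsShrinkage η) (t : ℝ) : |η t| = η |t| := by
  have hnonneg : 0 ≤ η |t| := h.map_zero ▸ h.mono (abs_nonneg t)
  rcases abs_choice t with ht | ht <;> rw [ht] at hnonneg ⊢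
  · exact abs_of_nonneg hnonneg
  · rw [← abs_neg, ← h.odd, abs_of_nonneg hnonneg]

end IsShrinkage

lemma isShrinkage_id : IsShrinkage id :=
  ⟨fun _ => rfl, monotone_id, LipschitzWith.id⟩

/-- Kirszbraun's theorem for firmly nonexpansive maps: `f` is firmly nonexpansive exactly when
`2f - id` is nonexpansive, and nonexpansive real functions extend. -/
lemma exists_monotone_lipschitzWith_one_comp_eq {ι : Type*} (s f : ι → ℝ)
    (hf : ∀ i j, (f i - f j) ^ 2 ≤ (f i - f j) * (s i - s j)) :
    ∃ g : ℝ → ℝ, Monotone g ∧ LipschitzWith 1 g ∧ ∀ i, g (s i) = f i := by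
  set r : ι → ℝ := fun i => 2 * f i - s i with hr
  have hrlip : ∀ i j, |r i - r j| ≤ |s i - s j| := by
    intro i j
    refine sq_le_sq.1 ?_
    linear_combination 4 * hf i j
  have hfactors : r.FactorsThrough s := fun i j hij =>
    sub_eq_zero.1 (abs_nonpos_iff.1 ((hrlip i j).trans_eq (by rw [hij, sub_self, abs_zero])))
  have hlip : LipschitzOnWith 1 (Function.extend s r 0) (Set.range s) := by
    refine LipschitzOnWith.of_dist_le_mul ?_
    rintro _ ⟨i, rfl⟩ _ ⟨j, rfl⟩
    simpa [hfactors.extend_apply, Real.dist_eq] using hrlip i j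
  obtain ⟨h, hh, hhs⟩ := hlip.extend_real
  have habs : ∀ u v, |h u - h v| ≤ |u - v| := fun u v => by
    simpa [Real.dist_eq] using hh.dist_le_mul u v
  refine ⟨fun t => (h t + t) / 2, fun u v huv => ?_, LipschitzWith.of_dist_le_mul fun u v => ?_,
    fun i => ?_⟩
  · have := (abs_le.1 ((habs v u).trans_eq (abs_of_nonneg (sub_nonneg.2 huv)))).1
    dsimp only
    linarith
  · calc |(h u + u) / 2 - (h v + v) / 2| = |(h u - h v) + (u - v)| / 2 := by
          rw [← abs_two, ← abs_div, abs_two]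
          ring_nf
      _ ≤ (1 : NNReal) * |u - v| := by
          rw [NNReal.coe_one]
          linarith [abs_add_le (h u - h v) (u - v), habs u v]
  · have hval : h (s i) = r i := by
      rw [← hhs (Set.mem_range_self i), hfactors.extend_apply]
    dsimp only
    rw [hval, hr]
    ring

lemma isShrinkage_oddPart {g : ℝ → ℝ} (hmono : Monotone g) (hlip : LipschitzWith 1 g) :
    IsShrinkage fun t => (g t - g (-t)) / 2 where
  odd t := by
    dsimp only
    rw [neg_neg]
    ring
  mono u v huv := by
    have := hmono huv
    have := hmono (neg_le_neg huv)
    dsimp only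
    linarith
  lipschitz := LipschitzWith.of_dist_le_mul fun u v => by
    have h₁ := hlip.dist_le_mul u v
    have h₂ := hlip.dist_le_mul (-v) (-u)
    simp only [Real.dist_eq, NNReal.coe_one, one_mul, neg_sub_neg] at h₁ h₂ ⊢
    rw [abs_le] at h₁ h₂ ⊢
    constructor <;> linarith [h₁.1, h₂.1, h₁.2, h₂.2]

lemma exists_isShrinkage_comp_eq {ι : Type*} (s f : ι → ℝ)
    (hf : ∀ i j, ∀ e : ℝ, |e| = 1 →
      (f i - e * f j) ^ 2 ≤ (f i - e * f j) * (s i - e * s j)) :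
    ∃ η, IsShrinkage η ∧ ∀ i, η (s i) = f i := by
  obtain ⟨g, hmono, hlip, hg⟩ :=
    exists_monotone_lipschitzWith_one_comp_eq (Sum.elim s (-s)) (Sum.elim f (-f)) (by
      have hpos := fun i j => hf i j 1 abs_one
      have hneg := fun i j => hf i j (-1) (by rw [abs_neg, abs_one])
      rintro (i | i) (j | j) <;> simp only [Sum.elim_inl, Sum.elim_inr, Pi.neg_apply] <;>
        linarith [hpos i j, hneg i j])
  refine ⟨_, isShrinkage_oddPart hmono hlip, fun i => ?_⟩
  have hl : g (s i) = f i := hg (.inl i)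
  have hr : g (-s i) = -f i := hg (.inr i)
  rw [hl, hr]
  ring

lemma exists_isShrinkage_comp_eq_slopeProx {p : ℕ} {lam : Fin p → ℝ} (hlam : ∀ i, 0 ≤ lam i)
    (hmono : Monotone lam) (y : Fin p → ℝ) :
    ∃ η, IsShrinkage η ∧ slopeProx lam y = η ∘ y := by
  obtain ⟨η, hη, hηy⟩ := exists_isShrinkage_comp_eq y (slopeProx lam y)
    fun i j _ he => sq_slopeProx_sub_le hlam hmono y i j he
  exact ⟨η, hη, funext fun i => (hηy i).symm⟩

lemma isClosed_setOf_isShrinkage : IsClosed {η | IsShrinkage η} := by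
  have heq : {η : ℝ → ℝ | IsShrinkage η}
      = {η | Function.Odd η} ∩ {η | Monotone η} ∩ {η | LipschitzWith 1 η} :=
    Set.ext fun η => ⟨fun h => ⟨⟨h.odd, h.mono⟩, h.lipschitz⟩, fun h => ⟨h.1.1, h.1.2, h.2⟩⟩
  have hodd : IsClosed {η : ℝ → ℝ | Function.Odd η} := by
    simp only [Function.Odd, Set.ofPred_forall]
    exact isClosed_iInter fun t => isClosed_eq (by fun_prop) (by fun_prop)
  rw [heq]
  exact (hodd.inter isClosed_monotone).inter (isClosed_setOfPred_lipschitzWith 1)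

lemma isCompact_setOf_isShrinkage : IsCompact {η : C(ℝ, ℝ) | IsShrinkage η} := by
  refine ArzelaAscoli.isCompact_of_equicontinuous _ ?_ ?_
  · have himage : ContinuousMap.toFun '' {η : C(ℝ, ℝ) | IsShrinkage η} = {η | IsShrinkage η} := by
      ext η
      refine ⟨?_, fun h => ⟨⟨η, h.lipschitz.continuous⟩, h, rfl⟩⟩
      rintro ⟨η, h, rfl⟩
      exact h
    rw [himage]
    exact (isCompact_univ_pi fun t : ℝ => isCompact_Icc (a := -|t|) (b := |t|)).of_isClosed_subset
      isClosed_setOf_isShrinkage fun η hη t _ => abs_le.1 (hη.abs_le t)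
  · exact (LipschitzWith.uniformEquicontinuous _ 1 fun η => η.2.lipschitz).equicontinuous

end Shrinkage

section Pratt

/-- Pratt's extension of dominated convergence to dominating functions that converge together with
their integrals: `G n - g n ≥ 0` dominates `(H - (G n - g n))⁺` by `H`. -/
lemma tendsto_integral_zero_of_le_of_tendsto_integral {α ι : Type*} [MeasurableSpace α]
    {μ : Measure α} {l : Filter ι} [l.IsCountablyGenerated] {g G : ι → α → ℝ} {H : α → ℝ}
    (hgm : ∀ n, AEStronglyMeasurable (g n) μ) (hG : ∀ n, Integrable (G n) μ)
    (hH : Integrable H μ) (hg0 : ∀ n a, 0 ≤ g n a) (hgG : ∀ n a, g n a ≤ G n a)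
    (hg : ∀ᵐ a ∂μ, Tendsto (fun n => g n a) l (𝓝 0))
    (hGH : ∀ᵐ a ∂μ, Tendsto (fun n => G n a) l (𝓝 (H a)))
    (hint : Tendsto (fun n => ∫ a, G n a ∂μ) l (𝓝 (∫ a, H a ∂μ))) :
    Tendsto (fun n => ∫ a, g n a ∂μ) l (𝓝 0) := by
  have hgi : ∀ n, Integrable (g n) μ := fun n => (hG n).mono' (hgm n) <|
    .of_forall fun a => (abs_of_nonneg (hg0 n a)).trans_le (hgG n a)
  set d : ι → α → ℝ := fun n a => max (H a - (G n a - g n a)) 0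
  have hdi : ∀ n, Integrable (d n) μ := fun n => (hH.sub ((hG n).sub (hgi n))).pos_part
  have hdlim : Tendsto (fun n => ∫ a, d n a ∂μ) l (𝓝 (∫ _, 0 ∂μ)) := by
    refine tendsto_integral_filter_of_dominated_convergence (fun a => |H a|)
      (.of_forall fun n => (hdi n).1) (.of_forall fun n => .of_forall fun a => ?_) hH.abs ?_
    · rw [Real.norm_of_nonneg (le_max_right _ _)]
      exact max_le ((sub_le_self _ (sub_nonneg.2 (hgG n a))).trans (le_abs_self _)) (abs_nonneg _)
    · filter_upwards [hg, hGH] with a hga hGa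
      simpa using (hGa.sub hga).const_sub (H a) |>.max (tendsto_const_nhds (x := (0 : ℝ)))
  have hbound : ∀ n, ∫ a, g n a ∂μ ≤ (∫ a, G n a ∂μ - ∫ a, H a ∂μ) + ∫ a, d n a ∂μ := by
    intro n
    rw [← integral_sub' (hG n) hH, ← integral_add ((hG n).sub hH) (hdi n)]
    refine integral_mono (hgi n) (((hG n).sub hH).add (hdi n)) fun a => ?_
    have : H a - (G n a - g n a) ≤ d n a := le_max_left _ _
    simp only [Pi.sub_apply]
    linarith
  refine squeeze_zero (fun n => integral_nonneg (hg0 n)) hbound ?_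
  simpa using (hint.sub_const (∫ a, H a ∂μ)).add hdlim

end Pratt

section Quantile

open ProbabilityTheory

/-- The uniform distribution on the unit interval, on which all quantile functions live. -/
noncomputable abbrev uniform01 : Measure ℝ :=
  volume.restrict (Set.Ioo 0 1)

/-- The generalized inverse of the distribution function of `ν`. It is meaningful for levels
`u ∈ (0, 1)`, where the infimum is over a nonempty set bounded below. -/
noncomputable def quantile (ν : Measure ℝ) (u : ℝ) : ℝ :=
  sInf {x | u ≤ cdf ν x}

variable (ν : Measure ℝ) {u : ℝ}

lemma quantile_le_iff (hu : u ∈ Set.Ioo (0 : ℝ) 1) {x : ℝ} :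
    quantile ν u ≤ x ↔ u ≤ cdf ν x := by
  obtain ⟨b, hb⟩ := ((tendsto_cdf_atTop ν).eventually_const_le hu.2).exists
  obtain ⟨a, ha⟩ := ((tendsto_cdf_atBot ν).eventually_lt_const hu.1).exists
  have hbdd : BddBelow {x | u ≤ cdf ν x} :=
    ⟨a, fun x hx => le_of_not_gt fun hxa => (hx.trans (monotone_cdf ν hxa.le)).not_gt ha⟩
  refine ⟨fun h => ?_, fun h => csInf_le hbdd h⟩
  refine ge_of_tendsto (((cdf ν).right_continuous x).mono_left
    (nhdsWithin_mono x Set.Ioi_subset_Ici_self)) ?_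
  filter_upwards [self_mem_nhdsWithin] with y hy
  obtain ⟨z, hz, hzy⟩ := exists_lt_of_csInf_lt ⟨b, hb⟩ (h.trans_lt hy)
  exact le_trans hz (monotone_cdf ν hzy.le)

lemma monotoneOn_quantile : MonotoneOn (quantile ν) (Set.Ioo 0 1) := fun _ hu _ hv huv =>
  (quantile_le_iff ν hu).2 (huv.trans ((quantile_le_iff ν hv).1 le_rfl))

lemma aemeasurable_quantile : AEMeasurable (quantile ν) uniform01 :=
  aemeasurable_restrict_of_monotoneOn measurableSet_Ioo (monotoneOn_quantile ν)

lemma map_quantile_uniform01 [IsProbabilityMeasure ν] : uniform01.map (quantile ν) = ν := by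
  refine Measure.ext_of_Iic _ _ fun x => ?_
  have hpre : quantile ν ⁻¹' Set.Iic x ∩ Set.Ioo 0 1 = Set.Iic (cdf ν x) ∩ Set.Ioo 0 1 :=
    Set.ext fun u => and_congr_left fun hu => quantile_le_iff ν hu
  have hIoc : Set.Iic (cdf ν x) ∩ Set.Ioc 0 1 = Set.Ioc 0 (cdf ν x) := by
    rw [Set.inter_comm, Set.Ioc_inter_Iic, min_eq_right (cdf_le_one ν x)]
  rw [Measure.map_apply_of_aemeasurable (aemeasurable_quantile ν) measurableSet_Iic,
    Measure.restrict_apply₀' measurableSet_Ioo.nullMeasurableSet, hpre,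
    measure_congr ((ae_eq_refl _).inter Ioo_ae_eq_Ioc), hIoc, Real.volume_Ioc, sub_zero, ofReal_cdf]

variable {ν}

lemma memLp_quantile [IsProbabilityMeasure ν] {q : ENNReal} (hν : MemLp id q ν) :
    MemLp (quantile ν) q uniform01 := by
  rw [← map_quantile_uniform01 ν] at hν
  exact hν.comp_of_map (aemeasurable_quantile ν)

lemma integral_comp_quantile [IsProbabilityMeasure ν] {f : ℝ → ℝ}
    (hf : AEStronglyMeasurable f ν) :
    ∫ u, f (quantile ν u) ∂uniform01 = ∫ x, f x ∂ν := by
  rw [← map_quantile_uniform01 ν] at hf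
  conv_rhs => rw [← map_quantile_uniform01 ν]
  exact (integral_map (aemeasurable_quantile ν) hf).symm

lemma tendsto_quantile {ι : Type*} {L : Filter ι} {νs : ι → ProbabilityMeasure ℝ}
    {ν : ProbabilityMeasure ℝ} (hν : Tendsto νs L (𝓝 ν)) (hu : u ∈ Set.Ioo (0 : ℝ) 1)
    (hcont : ContinuousWithinAt (quantile ν) (Set.Ioo 0 1) u) :
    Tendsto (fun n => quantile (νs n) u) L (𝓝 (quantile ν u)) := by
  refine tendsto_order.2 ⟨fun x hx => ?_, fun x hx => ?_⟩
  · have hlt : (ν : Measure ℝ) (Set.Iic x) < ENNReal.ofReal u := by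
      rw [← ofReal_cdf, ENNReal.ofReal_lt_ofReal_iff hu.1]
      exact lt_of_not_ge fun h => hx.not_ge ((quantile_le_iff _ hu).2 h)
    have hlimsup := ProbabilityMeasure.limsup_measure_closed_le_of_tendsto hν
      (isClosed_Iic (a := x))
    filter_upwards [eventually_lt_of_limsup_lt (hlimsup.trans_lt hlt)] with n hn
    rw [← ofReal_cdf, ENNReal.ofReal_lt_ofReal_iff hu.1] at hn
    exact lt_of_not_ge fun h => hn.not_ge ((quantile_le_iff _ hu).1 h)
  · have hright : ∀ᶠ v in 𝓝[>] u, quantile ν v < x := by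
      rw [ContinuousWithinAt, isOpen_Ioo.nhdsWithin_eq hu] at hcont
      exact (hcont.eventually_lt_const hx).filter_mono nhdsWithin_le_nhds
    obtain ⟨v, hvx, huv, hv1⟩ := (hright.and (Ioo_mem_nhdsGT hu.2)).exists
    obtain ⟨w, hvw, hwx⟩ := exists_between hvx
    have hv : v ∈ Set.Ioo (0 : ℝ) 1 := ⟨hu.1.trans huv, hv1⟩
    have hlt : ENNReal.ofReal u < (ν : Measure ℝ) (Set.Iio w) :=
      calc ENNReal.ofReal u < ENNReal.ofReal v := (ENNReal.ofReal_lt_ofReal_iff hv.1).2 huv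
        _ ≤ (ν : Measure ℝ) (Set.Iic (quantile ν v)) := by
          rw [← ofReal_cdf]
          exact ENNReal.ofReal_le_ofReal ((quantile_le_iff _ hv).1 le_rfl)
        _ ≤ (ν : Measure ℝ) (Set.Iio w) := measure_mono (Set.Iic_subset_Iio.2 hvw)
    have hliminf := ProbabilityMeasure.le_liminf_measure_open_of_tendsto hν
      (isOpen_Iio (a := w))
    filter_upwards [eventually_lt_of_lt_liminf (hlt.trans_le hliminf)] with n hn
    refine lt_of_le_of_lt ((quantile_le_iff _ hu).2 ?_) hwx
    rw [← ENNReal.ofReal_le_ofReal_iff (cdf_nonneg _ _), ofReal_cdf]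
    exact hn.le.trans (measure_mono Set.Iio_subset_Iic_self)

lemma ae_tendsto_quantile {ι : Type*} {L : Filter ι} {νs : ι → ProbabilityMeasure ℝ}
    {ν : ProbabilityMeasure ℝ} (hν : Tendsto νs L (𝓝 ν)) :
    ∀ᵐ u ∂uniform01, Tendsto (fun n => quantile (νs n) u) L (𝓝 (quantile ν u)) := by
  have hcountable := (monotoneOn_quantile (ν : Measure ℝ)).countable_not_continuousWithinAt
  filter_upwards [hcountable.ae_notMem _, ae_restrict_mem measurableSet_Ioo] with u hcont hu
  exact tendsto_quantile hν hu (by_contra fun h => hcont ⟨hu, h⟩)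

end Quantile

section EmpiricalMeasure

open ProbabilityTheory
open scoped ENNReal

/-- The empirical measure of a finite family of points. -/
noncomputable def empiricalMeasure {ι α : Type*} [Fintype ι] [MeasurableSpace α] (x : ι → α) :
    Measure α :=
  (Fintype.card ι : ℝ≥0∞)⁻¹ • ∑ i, Measure.dirac (x i)

/-- The coordinate `⌈p * u⌉` (counted from one) at which a monotone vector of length `p` takes its
`u`-quantile; meaningful for `u ∈ (0, 1]`. -/
noncomputable def quantileIndex (p : ℕ) [NeZero p] (u : ℝ) : Fin p :=
  Fin.ofNat p (⌈p * u⌉₊ - 1)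

section

variable {ι α : Type*} [Fintype ι] [MeasurableSpace α]

instance [Nonempty ι] (x : ι → α) : IsProbabilityMeasure (empiricalMeasure x) := by
  constructor
  simp [empiricalMeasure, ENNReal.inv_mul_cancel]

lemma integral_empiricalMeasure [MeasurableSingletonClass α] (x : ι → α) (f : α → ℝ) :
    ∫ t, f t ∂empiricalMeasure x = (∑ i, f (x i)) / Fintype.card ι := by
  rw [empiricalMeasure, integral_smul_measure,
    integral_finsetSum_measure fun i _ => integrable_dirac (by simp)]
  simp [div_eq_inv_mul]

lemma cdf_empiricalMeasure [Nonempty ι] (x : ι → ℝ) (t : ℝ) :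
    cdf (empiricalMeasure x) t = #{i | x i ≤ t} / Fintype.card ι := by
  rw [cdf_eq_real, ← integral_indicator_one measurableSet_Iic, integral_empiricalMeasure]
  simp [Set.indicator_apply, Finset.sum_boole]

end

variable {p : ℕ} [NeZero p]

lemma quantileIndex_eq_iff {u : ℝ} (hu : u ∈ Set.Ioo (0 : ℝ) 1) (i : Fin p) :
    quantileIndex p u = i ↔ u ∈ Set.Ioc ((i : ℝ) / p) ((i + 1) / p) := by
  have hp : (0 : ℝ) < p := Nat.cast_pos.2 (NeZero.pos p)
  have hpos : 0 < ⌈p * u⌉₊ := Nat.ceil_pos.2 (mul_pos hp hu.1)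
  have hle : ⌈p * u⌉₊ ≤ p := Nat.ceil_le.2 (mul_le_of_le_one_right hp.le hu.2.le)
  rw [Fin.ext_iff, quantileIndex, Fin.val_ofNat, Nat.mod_eq_of_lt (by omega), Set.mem_Ioc,
    div_lt_iff₀' hp, le_div_iff₀' hp, ← Nat.lt_ceil, ← Nat.cast_add_one, ← Nat.ceil_le]
  omega

lemma measurable_quantileIndex : Measurable (quantileIndex p) :=
  (measurable_from_top (f := fun k => Fin.ofNat p (k - 1))).comp
    (Nat.measurable_ceil.comp (measurable_const_mul (p : ℝ)))

lemma map_quantileIndex_uniform01 : uniform01.map (quantileIndex p) = empiricalMeasure id := by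
  have hp : (0 : ℝ) < p := Nat.cast_pos.2 (NeZero.pos p)
  refine Measure.ext_of_singleton fun i => ?_
  have hpre : quantileIndex p ⁻¹' {i} ∩ Set.Ioo 0 1
      = Set.Ioc ((i : ℝ) / p) ((i + 1) / p) ∩ Set.Ioo 0 1 :=
    Set.ext fun u => and_congr_left fun hu => quantileIndex_eq_iff hu i
  have hcell : Set.Ioc ((i : ℝ) / p) ((i + 1) / p) ⊆ Set.Ioc 0 1 :=
    Set.Ioc_subset_Ioc (by positivity) ((div_le_one hp).2 (mod_cast i.isLt))
  have hwidth : ((i : ℝ) + 1) / p - i / p = (p : ℝ)⁻¹ := by ring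
  rw [Measure.map_apply measurable_quantileIndex (measurableSet_singleton i),
    Measure.restrict_apply₀' measurableSet_Ioo.nullMeasurableSet, hpre,
    measure_congr ((ae_eq_refl _).inter Ioo_ae_eq_Ioc), Set.inter_eq_left.2 hcell,
    Real.volume_Ioc, hwidth, ENNReal.ofReal_inv_of_pos hp, ENNReal.ofReal_natCast]
  simp [empiricalMeasure, Set.indicator_apply]

lemma integral_comp_quantileIndex (f : Fin p → ℝ) :
    ∫ u, f (quantileIndex p u) ∂uniform01 = (∑ i, f i) / p := by
  rw [← integral_map (f := f) measurable_quantileIndex.aemeasurable (by fun_prop),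
    map_quantileIndex_uniform01, integral_empiricalMeasure, Fintype.card_fin]
  rfl

lemma memLp_comp_quantileIndex (f : Fin p → ℝ) (q : ℝ≥0∞) :
    MemLp (fun u => f (quantileIndex p u)) q uniform01 :=
  (MemLp.of_discrete (f := f)).comp_of_map measurable_quantileIndex.aemeasurable

lemma quantile_empiricalMeasure {a : Fin p → ℝ} (ha : Monotone a) {u : ℝ}
    (hu : u ∈ Set.Ioo (0 : ℝ) 1) :
    quantile (empiricalMeasure a) u = a (quantileIndex p u) := by
  have hp : (0 : ℝ) < p := Nat.cast_pos.2 (NeZero.pos p)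
  obtain ⟨hlt, hle⟩ := (quantileIndex_eq_iff (p := p) hu _).1 rfl
  rw [div_lt_iff₀ hp] at hlt
  rw [le_div_iff₀ hp] at hle
  refine eq_of_forall_ge_iff fun x => ?_
  rw [quantile_le_iff _ hu, cdf_empiricalMeasure, Fintype.card_fin, le_div_iff₀ hp]
  set k := quantileIndex p u
  refine ⟨fun h => ?_, fun h => hle.trans ?_⟩
  · by_contra! hx
    have hsub : ({i | a i ≤ x} : Finset (Fin p)) ⊆ Iio k := fun i hi =>
      mem_Iio.2 <| lt_of_not_ge fun hki => (hx.trans_le (ha hki)).not_ge (by simpa using hi)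
    have hcard := card_le_card hsub
    rw [Fin.card_Iio] at hcard
    exact (hlt.trans_le h).not_ge (Nat.cast_le.2 hcard)
  · have hsub : Iic k ⊆ ({i | a i ≤ x} : Finset (Fin p)) := fun i hi => by
      simpa using (ha (mem_Iic.1 hi)).trans h
    have hcard := card_le_card hsub
    rw [Fin.card_Iic] at hcard
    exact_mod_cast hcard

end EmpiricalMeasure

section EmpConverges

variable {x : (p : ℕ) → Fin p → ℝ} {μ : Measure ℝ}

/-- The vectors are shifted to length `p + 1` because the empirical measure of the empty family is
not a probability measure. -/
lemma EmpConverges.tendsto_empiricalMeasure [IsProbabilityMeasure μ] (h : EmpConverges x μ) :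
    Tendsto (β := ProbabilityMeasure ℝ)
      (fun p => ⟨empiricalMeasure (x (p + 1)), inferInstance⟩) atTop (𝓝 ⟨μ, inferInstance⟩) := by
  refine ProbabilityMeasure.tendsto_iff_forall_integral_tendsto.2 fun f => ?_
  simpa [integral_empiricalMeasure] using (tendsto_add_atTop_iff_nat 1).2 (h f)

lemma EmpConverges.ae_tendsto_quantileIndex [IsProbabilityMeasure μ] (h : EmpConverges x μ)
    (hx : ∀ p, Monotone (x p)) :
    ∀ᵐ u ∂uniform01,
      Tendsto (fun p => x (p + 1) (quantileIndex (p + 1) u)) atTop (𝓝 (quantile μ u)) := by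
  filter_upwards [ae_tendsto_quantile h.tendsto_empiricalMeasure,
    ae_restrict_mem measurableSet_Ioo] with u hlim hu
  exact hlim.congr fun p => quantile_empiricalMeasure (hx (p + 1)) hu

/-- Convergence of the empirical measures of `x⁽ᵖ⁾` to `μ` in the Wasserstein-2 sense: weakly and
with second moments. -/
structure EmpConvergesL2 (x : (p : ℕ) → Fin p → ℝ) (μ : Measure ℝ) : Prop where
  empConverges : EmpConverges x μ
  tendsto_sq : Tendsto (fun p => (∑ i, x p i ^ 2) / (p : ℝ)) atTop (𝓝 (∫ t, t ^ 2 ∂μ))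

lemma EmpConvergesL2.sortedAbs (h : EmpConvergesL2 x μ) :
    EmpConvergesL2 (fun p => sortedAbs (x p)) (μ.map abs) where
  empConverges f := by
    rw [integral_map continuous_abs.aemeasurable f.continuous.aestronglyMeasurable]
    simp only [sum_comp_sortedAbs f]
    exact h.empConverges (f.compContinuous ⟨abs, continuous_abs⟩)
  tendsto_sq := by
    rw [integral_map continuous_abs.aemeasurable (by fun_prop)]
    simp only [sum_comp_sortedAbs (· ^ 2), sq_abs]
    exact h.tendsto_sq

lemma EmpConvergesL2.tendsto_integral_quantileIndex_sq [IsProbabilityMeasure μ]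
    (h : EmpConvergesL2 x μ) :
    Tendsto (fun p => ∫ u, x (p + 1) (quantileIndex (p + 1) u) ^ 2 ∂uniform01) atTop
      (𝓝 (∫ u, quantile μ u ^ 2 ∂uniform01)) := by
  rw [integral_comp_quantile (f := (· ^ 2)) (by fun_prop)]
  simp only [integral_comp_quantileIndex fun i => x _ i ^ 2]
  exact (tendsto_add_atTop_iff_nat 1).2 h.tendsto_sq

end EmpConverges

section ShrinkageLoss

/-- Contribution to the SLOPE objective of an entry of magnitude `a`, paired with the penalty weight
`l`, when the shrinkage `η` is applied to it. -/
noncomputable def shrinkageLoss (η : ℝ → ℝ) (a l : ℝ) : ℝ :=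
  1 / 2 * (a - η a) ^ 2 + l * η a

/-- A bound for the variation of `shrinkageLoss η` between `(a, l)` and `(b, m)` that is uniform in
the shrinkage `η`. -/
noncomputable def lossGap (a l b m : ℝ) : ℝ :=
  (|a - b| + |l - m|) * (|a| + |l| + |b| + |m|)

variable {η : ℝ → ℝ}

lemma lossGap_nonneg (a l b m : ℝ) : 0 ≤ lossGap a l b m := by
  unfold lossGap
  positivity

lemma lossGap_le (a l b m : ℝ) : lossGap a l b m ≤ 4 * (a ^ 2 + l ^ 2 + b ^ 2 + m ^ 2) := by
  have hsum : |a - b| + |l - m| ≤ |a| + |l| + |b| + |m| := by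
    linarith [abs_sub a b, abs_sub l m]
  calc lossGap a l b m ≤ (|a| + |l| + |b| + |m|) ^ 2 := by
        rw [sq]
        exact mul_le_mul_of_nonneg_right hsum (by positivity)
    _ ≤ 4 * (|a| ^ 2 + |l| ^ 2 + |b| ^ 2 + |m| ^ 2) := by
        nlinarith [sq_nonneg (|a| - |l|), sq_nonneg (|a| - |b|), sq_nonneg (|a| - |m|),
          sq_nonneg (|l| - |b|), sq_nonneg (|l| - |m|), sq_nonneg (|b| - |m|)]
    _ = 4 * (a ^ 2 + l ^ 2 + b ^ 2 + m ^ 2) := by simp only [sq_abs]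

namespace IsShrinkage

lemma abs_shrinkageLoss_sub_le (h : IsShrinkage η) (a l b m : ℝ) :
    |shrinkageLoss η a l - shrinkageLoss η b m| ≤ lossGap a l b m := by
  have hsplit : shrinkageLoss η a l - shrinkageLoss η b m
      = 1 / 2 * (((a - η a) - (b - η b)) * ((a - η a) + (b - η b)))
        + (l - m) * η a + m * (η a - η b) := by
    unfold shrinkageLoss
    ring
  have hquad : |((a - η a) - (b - η b)) * ((a - η a) + (b - η b))| ≤ |a - b| * (|a| + |b|) := by
    rw [abs_mul]
    exact mul_le_mul (h.abs_residual_sub_le a b)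
      ((abs_add_le _ _).trans (add_le_add (h.abs_residual_le a) (h.abs_residual_le b)))
      (abs_nonneg _) (abs_nonneg _)
  have hweight : |(l - m) * η a| ≤ |l - m| * |a| := by
    rw [abs_mul]
    exact mul_le_mul_of_nonneg_left (h.abs_le a) (abs_nonneg _)
  have hvalue : |m * (η a - η b)| ≤ |m| * |a - b| := by
    rw [abs_mul]
    exact mul_le_mul_of_nonneg_left (h.abs_sub_le a b) (abs_nonneg _)
  have hrest :
      0 ≤ 1 / 2 * |a - b| * (|a| + |b|) + |a - b| * |l| + |l - m| * (|l| + |b| + |m|) := by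
    positivity
  calc |shrinkageLoss η a l - shrinkageLoss η b m|
      ≤ 1 / 2 * (|a - b| * (|a| + |b|)) + |l - m| * |a| + |m| * |a - b| := by
        rw [hsplit]
        refine (abs_add_three _ _ _).trans ?_
        rw [abs_mul (1 / 2), abs_of_pos (one_half_pos (α := ℝ))]
        gcongr
    _ ≤ lossGap a l b m := by
        unfold lossGap
        linarith

lemma abs_shrinkageLoss_le (h : IsShrinkage η) (a l : ℝ) :
    |shrinkageLoss η a l| ≤ 4 * (a ^ 2 + l ^ 2) := by
  simpa [shrinkageLoss, h.map_zero] using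
    (h.abs_shrinkageLoss_sub_le a l 0 0).trans (lossGap_le a l 0 0)

lemma sortedAbs_comp (h : IsShrinkage η) {p : ℕ} (y : Fin p → ℝ) :
    sortedAbs (η ∘ y) = η ∘ sortedAbs y := by
  have hmono : Monotone ((fun j => |(η ∘ y) j|) ∘ Tuple.sort fun j => |y j|) := by
    intro i j hij
    simp only [Function.comp_apply, h.abs_map (y _)]
    exact h.mono (monotone_sortedAbs y hij)
  funext i
  exact (congrFun (Tuple.comp_sort_eq_comp_iff_monotone.2 hmono) i).symm.trans (h.abs_map _)

lemma slopeObj_comp (h : IsShrinkage η) {p : ℕ} (lam y : Fin p → ℝ) :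
    slopeObj lam y (η ∘ y) = ∑ i, shrinkageLoss η (sortedAbs y i) (lam i) := by
  have hresidual : ∑ i, (y i - η (y i)) ^ 2 = ∑ i, (sortedAbs y i - η (sortedAbs y i)) ^ 2 := by
    rw [sum_comp_sortedAbs fun t => (t - η t) ^ 2]
    refine sum_congr rfl fun i _ => ?_
    rcases abs_choice (y i) with hi | hi <;> rw [hi]
    rw [h.odd]
    ring
  simp only [slopeObj, sortedL1, shrinkageLoss, h.sortedAbs_comp, Function.comp_apply, hresidual,
    sum_add_distrib, mul_sum]

end IsShrinkage

end ShrinkageLoss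

section Risk

variable {α : Type*} [MeasurableSpace α] {μ : Measure α} {η : ℝ → ℝ} {a l b m : α → ℝ}

lemma integrable_lossGap (ha : MemLp a 2 μ) (hl : MemLp l 2 μ) (hb : MemLp b 2 μ)
    (hm : MemLp m 2 μ) : Integrable (fun t => lossGap (a t) (l t) (b t) (m t)) μ := by
  have hsq := ((ha.integrable_sq.add hl.integrable_sq).add hb.integrable_sq).add hm.integrable_sq
  refine (hsq.const_mul 4).mono' ?_ (.of_forall fun t => ?_)
  · have := ha.1.aemeasurable
    have := hl.1.aemeasurable
    have := hb.1.aemeasurable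
    have := hm.1.aemeasurable
    exact AEMeasurable.aestronglyMeasurable (by unfold lossGap; fun_prop)
  · rw [Real.norm_of_nonneg (lossGap_nonneg _ _ _ _)]
    exact lossGap_le _ _ _ _

lemma tendsto_integral_lossGap {as ls : ℕ → α → ℝ} (has : ∀ n, MemLp (as n) 2 μ)
    (hls : ∀ n, MemLp (ls n) 2 μ) (ha : MemLp a 2 μ) (hl : MemLp l 2 μ)
    (ha_lim : ∀ᵐ t ∂μ, Tendsto (fun n => as n t) atTop (𝓝 (a t)))
    (hl_lim : ∀ᵐ t ∂μ, Tendsto (fun n => ls n t) atTop (𝓝 (l t)))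
    (ha_sq : Tendsto (fun n => ∫ t, as n t ^ 2 ∂μ) atTop (𝓝 (∫ t, a t ^ 2 ∂μ)))
    (hl_sq : Tendsto (fun n => ∫ t, ls n t ^ 2 ∂μ) atTop (𝓝 (∫ t, l t ^ 2 ∂μ))) :
    Tendsto (fun n => ∫ t, lossGap (as n t) (ls n t) (a t) (l t) ∂μ) atTop (𝓝 0) := by
  set G : (α → ℝ) → (α → ℝ) → α → ℝ := fun b m t => 4 * (b t ^ 2 + m t ^ 2 + a t ^ 2 + l t ^ 2)
  have hGint : ∀ {b m}, MemLp b 2 μ → MemLp m 2 μ → Integrable (G b m) μ := fun hb hm =>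
    (((hb.integrable_sq.add hm.integrable_sq).add ha.integrable_sq).add
      hl.integrable_sq).const_mul 4
  have hGval : ∀ {b m}, MemLp b 2 μ → MemLp m 2 μ → ∫ t, G b m t ∂μ
      = 4 * (∫ t, b t ^ 2 ∂μ + ∫ t, m t ^ 2 ∂μ + ∫ t, a t ^ 2 ∂μ + ∫ t, l t ^ 2 ∂μ) := by
    intro b m hb hm
    rw [integral_const_mul, integral_add _ hl.integrable_sq, integral_add _ ha.integrable_sq,
      integral_add hb.integrable_sq hm.integrable_sq]
    · exact hb.integrable_sq.add hm.integrable_sq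
    · exact (hb.integrable_sq.add hm.integrable_sq).add ha.integrable_sq
  refine tendsto_integral_zero_of_le_of_tendsto_integral (G := fun n => G (as n) (ls n))
    (H := G a l) (fun n => (integrable_lossGap (has n) (hls n) ha hl).1)
    (fun n => hGint (has n) (hls n)) (hGint ha hl) (fun n t => lossGap_nonneg _ _ _ _)
    (fun n t => lossGap_le _ _ _ _) ?_ ?_ ?_
  · filter_upwards [ha_lim, hl_lim] with t hat hlt
    have := ((hat.sub_const (a t)).abs.add (hlt.sub_const (l t)).abs).mul
      (((hat.abs.add hlt.abs).add_const |a t|).add_const |l t|)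
    simpa [lossGap] using this
  · filter_upwards [ha_lim, hl_lim] with t hat hlt
    exact (((hat.pow 2).add (hlt.pow 2)).add_const (a t ^ 2)).add_const (l t ^ 2) |>.const_mul 4
  · simp only [hGval (has _) (hls _), hGval ha hl]
    exact ((ha_sq.add hl_sq).add_const _).add_const _ |>.const_mul 4

lemma IsShrinkage.integrable_shrinkageLoss (h : IsShrinkage η) (ha : MemLp a 2 μ)
    (hl : MemLp l 2 μ) : Integrable (fun t => shrinkageLoss η (a t) (l t)) μ := by
  refine ((ha.integrable_sq.add hl.integrable_sq).const_mul 4).mono' ?_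
    (.of_forall fun t => h.abs_shrinkageLoss_le _ _)
  have := h.lipschitz.continuous.measurable
  have := ha.1.aemeasurable
  have := hl.1.aemeasurable
  exact AEMeasurable.aestronglyMeasurable (by unfold shrinkageLoss; fun_prop)

lemma IsShrinkage.abs_integral_shrinkageLoss_sub_le (h : IsShrinkage η) (ha : MemLp a 2 μ)
    (hl : MemLp l 2 μ) (hb : MemLp b 2 μ) (hm : MemLp m 2 μ) :
    |∫ t, shrinkageLoss η (a t) (l t) ∂μ - ∫ t, shrinkageLoss η (b t) (m t) ∂μ|
      ≤ ∫ t, lossGap (a t) (l t) (b t) (m t) ∂μ := by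
  have hal := h.integrable_shrinkageLoss ha hl
  have hbm := h.integrable_shrinkageLoss hb hm
  rw [← integral_sub hal hbm]
  exact abs_integral_le_integral_abs.trans <| integral_mono (hal.sub hbm).abs
    (integrable_lossGap ha hl hb hm) fun t => h.abs_shrinkageLoss_sub_le _ _ _ _

lemma exists_isShrinkage_forall_integral_shrinkageLoss_le (ha : MemLp a 2 μ) (hl : MemLp l 2 μ) :
    ∃ η, IsShrinkage η ∧ ∀ ξ, IsShrinkage ξ →
      ∫ t, shrinkageLoss η (a t) (l t) ∂μ ≤ ∫ t, shrinkageLoss ξ (a t) (l t) ∂μ := by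
  have hcont : ContinuousOn (fun η : C(ℝ, ℝ) => ∫ t, shrinkageLoss η (a t) (l t) ∂μ)
      {η | IsShrinkage η} := by
    refine continuousOn_of_dominated (bound := fun t => 4 * (a t ^ 2 + l t ^ 2))
      (fun η hη => (hη.integrable_shrinkageLoss ha hl).1)
      (fun η hη => .of_forall fun t => hη.abs_shrinkageLoss_le _ _)
      ((ha.integrable_sq.add hl.integrable_sq).const_mul 4) (.of_forall fun t => ?_)
    unfold shrinkageLoss
    fun_prop
  obtain ⟨η, hη, hmin⟩ :=
    isCompact_setOf_isShrinkage.exists_isMinOn ⟨.id ℝ, isShrinkage_id⟩ hcont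
  exact ⟨η, hη, fun ξ hξ => hmin (a := ⟨ξ, hξ.lipschitz.continuous⟩) hξ⟩

end Risk

section Asymptotics

lemma sum_sq_slopeProx_sub_div_le {p : ℕ} {lam : Fin p → ℝ} (hlam : ∀ i, 0 ≤ lam i)
    (hmono : Monotone lam) (y : Fin p → ℝ) {η : ℝ → ℝ} (hη : IsShrinkage η)
    {R : (ℝ → ℝ) → ℝ} (hmin : ∀ ξ, IsShrinkage ξ → R η ≤ R ξ) {B : ℝ}
    (hB : ∀ ξ, IsShrinkage ξ → |slopeObj lam y (ξ ∘ y) / p - R ξ| ≤ B) :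
    (∑ i, (slopeProx lam y i - η (y i)) ^ 2) / p ≤ 4 * B := by
  obtain ⟨ξ, hξ, hprox⟩ := exists_isShrinkage_comp_eq_slopeProx hlam hmono y
  have hgrowth : slopeObj lam y (slopeProx lam y) / p
      + 1 / 2 * ((∑ i, (slopeProx lam y i - η (y i)) ^ 2) / p) ≤ slopeObj lam y (η ∘ y) / p := by
    rw [← mul_div_assoc, ← add_div]
    gcongr
    exact slopeObj_slopeProx_add_half_sum_sq_le hlam hmono y (η ∘ y)
  have hlower := (abs_le.1 (hprox ▸ hB ξ hξ)).1
  have hupper := (abs_le.1 (hB η hη)).2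
  linarith [hmin ξ hξ]

/-- The expected loss of the shrinkage `η` when magnitudes and penalty weights are distributed as
`|Y|` and `λ`, coupled comonotonically through their quantile functions. -/
noncomputable def slopeRisk (μy μlam : Measure ℝ) (η : ℝ → ℝ) : ℝ :=
  ∫ u, shrinkageLoss η (quantile (μy.map abs) u) (quantile μlam u) ∂uniform01

lemma IsShrinkage.integral_shrinkageLoss_quantileIndex {η : ℝ → ℝ} (h : IsShrinkage η) {p : ℕ}
    [NeZero p] (lam y : Fin p → ℝ) :
    ∫ u, shrinkageLoss η (sortedAbs y (quantileIndex p u)) (lam (quantileIndex p u)) ∂uniform01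
      = slopeObj lam y (η ∘ y) / p := by
  rw [integral_comp_quantileIndex fun i => shrinkageLoss η (sortedAbs y i) (lam i),
    h.slopeObj_comp]

variable {μy μlam : Measure ℝ} [IsProbabilityMeasure μy] [IsProbabilityMeasure μlam]

instance : IsProbabilityMeasure (μy.map abs) :=
  Measure.isProbabilityMeasure_map continuous_abs.aemeasurable

lemma memLp_quantile_map_abs (hy : MemLp id 2 μy) :
    MemLp (quantile (μy.map abs)) 2 uniform01 :=
  memLp_quantile <| (memLp_map_measure_iff aestronglyMeasurable_id
    continuous_abs.aemeasurable).2 hy.abs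

lemma exists_tendsto_zero_forall_abs_slopeObj_div_sub_slopeRisk_le (hy : MemLp id 2 μy)
    (hlam : MemLp id 2 μlam) {y lam : (p : ℕ) → Fin p → ℝ} (hmono : ∀ p, Monotone (lam p))
    (hyconv : EmpConvergesL2 y μy) (hlamconv : EmpConvergesL2 lam μlam) :
    ∃ B : ℕ → ℝ, Tendsto B atTop (𝓝 0) ∧ ∀ p, ∀ η, IsShrinkage η →
      |slopeObj (lam (p + 1)) (y (p + 1)) (η ∘ y (p + 1)) / (p + 1 : ℕ)
        - slopeRisk μy μlam η| ≤ B p := by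
  have habs := hyconv.sortedAbs
  have hq := memLp_quantile_map_abs hy
  have hl := memLp_quantile hlam
  refine ⟨_, tendsto_integral_lossGap (fun p => memLp_comp_quantileIndex _ 2)
    (fun p => memLp_comp_quantileIndex _ 2) hq hl
    (habs.empConverges.ae_tendsto_quantileIndex fun p => monotone_sortedAbs (y p))
    (hlamconv.empConverges.ae_tendsto_quantileIndex hmono)
    habs.tendsto_integral_quantileIndex_sq hlamconv.tendsto_integral_quantileIndex_sq,
    fun p η hη => ?_⟩
  rw [← hη.integral_shrinkageLoss_quantileIndex]
  exact hη.abs_integral_shrinkageLoss_sub_le (memLp_comp_quantileIndex _ 2)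
    (memLp_comp_quantileIndex _ 2) hq hl

lemma tendsto_sum_sq_slopeProx_sub_div (hy : MemLp id 2 μy) (hlam : MemLp id 2 μlam) {η : ℝ → ℝ}
    (hη : IsShrinkage η) (hmin : ∀ ξ, IsShrinkage ξ → slopeRisk μy μlam η ≤ slopeRisk μy μlam ξ)
    {y lam : (p : ℕ) → Fin p → ℝ} (hnonneg : ∀ p i, 0 ≤ lam p i) (hmono : ∀ p, Monotone (lam p))
    (hyconv : EmpConvergesL2 y μy) (hlamconv : EmpConvergesL2 lam μlam) :
    Tendsto (fun p => (∑ i, (slopeProx (lam p) (y p) i - η (y p i)) ^ 2) / (p : ℝ))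
      atTop (𝓝 0) := by
  obtain ⟨B, hBlim, hB⟩ :=
    exists_tendsto_zero_forall_abs_slopeObj_div_sub_slopeRisk_le hy hlam hmono hyconv hlamconv
  refine (tendsto_add_atTop_iff_nat 1).1 <| squeeze_zero (fun p => by positivity)
    (fun p => sum_sq_slopeProx_sub_div_le (hnonneg _) (hmono _) _ hη hmin (hB p)) ?_
  simpa using hBlim.const_mul 4

end Asymptotics

theorem statement0
    (μy μlam : Measure ℝ)
    (hμy : IsProbabilityMeasure μy) (hμlam : IsProbabilityMeasure μlam)
    (hlam_supp : μlam (Set.Iio 0) = 0)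
    (hy2 : Integrable (fun t => t ^ 2) μy)
    (hlam2 : Integrable (fun t => t ^ 2) μlam) :
    ∃ η : ℝ → ℝ,
      (∀ t, η (-t) = -η t) ∧
      (∀ t₁ t₂ : ℝ, t₂ ≤ t₁ → 0 ≤ η t₁ - η t₂ ∧ η t₁ - η t₂ ≤ t₁ - t₂) ∧
      ∀ y lam : (p : ℕ) → Fin p → ℝ,
        (∀ p i, 0 ≤ lam p i) → (∀ p, Monotone (lam p)) →
        EmpConverges y μy → EmpConverges lam μlam →
        Tendsto (fun p => (∑ i, (y p i) ^ 2) / (p : ℝ)) atTop (𝓝 (∫ t, t ^ 2 ∂μy)) →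
        Tendsto (fun p => (∑ i, (lam p i) ^ 2) / (p : ℝ)) atTop (𝓝 (∫ t, t ^ 2 ∂μlam)) →
        Tendsto (fun p => (∑ i, (slopeProx (lam p) (y p) i - η (y p i)) ^ 2) / (p : ℝ))
          atTop (𝓝 0) := by
  have hy : MemLp id 2 μy := (memLp_two_iff_integrable_sq aestronglyMeasurable_id).2 hy2
  have hlam : MemLp id 2 μlam := (memLp_two_iff_integrable_sq aestronglyMeasurable_id).2 hlam2
  obtain ⟨η, hη, hmin⟩ : ∃ η, IsShrinkage η ∧
      ∀ ξ, IsShrinkage ξ → slopeRisk μy μlam η ≤ slopeRisk μy μlam ξ :=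
    exists_isShrinkage_forall_integral_shrinkageLoss_le (memLp_quantile_map_abs hy)
      (memLp_quantile hlam)
  refine ⟨η, hη.odd, fun t₁ t₂ ht => ⟨sub_nonneg.2 (hη.mono ht), hη.sub_le_sub ht⟩, ?_⟩
  intro y lam hnonneg hmono hyconv hlamconv hysq hlamsq
  exact tendsto_sum_sq_slopeProx_sub_div hy hlam hη hmin hnonneg hmono ⟨hyconv, hysq⟩
    ⟨hlamconv, hlamsq⟩
end

section
/- In the setting of the context, there exists a constant c > 0, not depending on p, such that for every ε ∈ (0, 1/2), the probability of the event { sup over all v ∈ ℝᵖ with ‖v‖ ≤ K√n of |L(v) − L̃(v)| < c·ε } tends to 1 as p → ∞. -/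
open MeasureTheory Filter Finset Topology ProbabilityTheory

/-- The random function `L(v)` from the CGMT auxiliary analysis. -/
noncomputable def Lfun {n p : ℕ} (w : Fin n → ℝ) (β lam : Fin p → ℝ)
    (g : Fin n → ℝ) (h : Fin p → ℝ) (v : Fin p → ℝ) : ℝ :=
  (1 / 2) * (max (Real.sqrt ((∑ i, (v i) ^ 2) / n * ((∑ j, (g j) ^ 2) / n)
      + (∑ j, (w j) ^ 2) / n
      + 2 * (Real.sqrt (∑ i, (v i) ^ 2) / Real.sqrt n) * ((∑ j, g j * w j) / n))
    - (∑ i, h i * v i) / n) 0) ^ 2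
  + sortedL1 lam (fun i => v i + β i) / n

/-- The deterministic-noise approximation `L̃(v)`. -/
noncomputable def Ltil {n p : ℕ} (σw : ℝ) (β lam : Fin p → ℝ)
    (h : Fin p → ℝ) (v : Fin p → ℝ) : ℝ :=
  (1 / 2) * (max (Real.sqrt ((∑ i, (v i) ^ 2) / n + σw ^ 2)
    - (∑ i, h i * v i) / n) 0) ^ 2
  + sortedL1 lam (fun i => v i + β i) / n

/-!
The penalty cancels in `L - L̃`, and over `‖v‖² ≤ K² n` the two radicands differ by at most
`K² |‖g‖²/n - 1| + |‖w‖²/n - σ_w²| + 2K |gᵀw/n|`. So the supremum is at most a continuous function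
of the four statistics `‖g‖²/n`, `‖w‖²/n`, `gᵀw/n`, `‖h‖²/n`, which vanishes at their limits in
probability: the last statistic stays bounded, and it only multiplies the radicand error.
-/

section RealInequalities

lemma sqrt_add_le_sqrt_add_sqrt (a b : ℝ) : √(a + b) ≤ √a + √b := by
  refine Real.sqrt_le_iff.2 ⟨by positivity, ?_⟩
  calc a + b ≤ √a ^ 2 + √b ^ 2 := by
        simpa only [Real.sq_sqrt'] using add_le_add (le_max_left a 0) (le_max_left b 0)
    _ ≤ (√a + √b) ^ 2 := by nlinarith [mul_nonneg (Real.sqrt_nonneg a) (Real.sqrt_nonneg b)]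

lemma abs_sqrt_sub_sqrt_le_sqrt_abs_sub (a b : ℝ) : |√a - √b| ≤ √|a - b| := by
  have sqrt_sub_le (x y : ℝ) : √x - √y ≤ √|x - y| := by
    rw [sub_le_iff_le_add]
    calc √x = √((x - y) + y) := by rw [sub_add_cancel]
      _ ≤ √(x - y) + √y := sqrt_add_le_sqrt_add_sqrt _ _
      _ ≤ √|x - y| + √y := by gcongr; exact le_abs_self _
  refine abs_sub_le_iff.2 ⟨sqrt_sub_le a b, ?_⟩
  rw [abs_sub_comm]
  exact sqrt_sub_le b a

lemma abs_half_sq_max_sub_half_sq_max_le (a b t : ℝ) :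
    |1 / 2 * max (a - t) 0 ^ 2 - 1 / 2 * max (b - t) 0 ^ 2|
      ≤ |a - b| * (|b| + |t|) + |a - b| ^ 2 / 2 := by
  set x := max (a - t) 0
  set y := max (b - t) 0
  have hxy : |x - y| ≤ |a - b| := by
    simpa only [sub_sub_sub_cancel_right] using abs_max_sub_max_le_abs (a - t) (b - t) 0
  have hy_nonneg : 0 ≤ y := le_max_right _ _
  have hy : y ≤ |b| + |t| :=
    max_le ((le_abs_self _).trans (abs_sub b t)) (by positivity)
  calc |1 / 2 * x ^ 2 - 1 / 2 * y ^ 2| = |(x - y) * y + (x - y) ^ 2 / 2| := by ring_nf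
    _ ≤ |x - y| * y + |x - y| ^ 2 / 2 := by
        refine (abs_add_le _ _).trans_eq ?_
        rw [abs_mul, abs_of_nonneg hy_nonneg, sq_abs,
          abs_of_nonneg (by positivity : 0 ≤ (x - y) ^ 2 / 2)]
    _ ≤ |a - b| * (|b| + |t|) + |a - b| ^ 2 / 2 := by gcongr

end RealInequalities

section DeterministicBound

/-- A bound for the difference of the radicands of `Lfun` and `Ltil` over `‖v‖² / n ≤ r`, in terms
of `G = ‖g‖² / n`, `W = ‖w‖² / n`, `X = gᵀw / n` and `s = σ_w²`. -/
noncomputable def radicandBound (r s G W X : ℝ) : ℝ :=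
  r * |G - 1| + |W - s| + 2 * √r * |X|

/-- A bound for `|Lfun - Ltil|` over `‖v‖² / n ≤ r`, with `G`, `W`, `X`, `s` as in `radicandBound`
and `H = ‖h‖² / n`. -/
noncomputable def approxBound (r s G W X H : ℝ) : ℝ :=
  √(radicandBound r s G W X) * (√(r + s) + √(r * H)) + √(radicandBound r s G W X) ^ 2 / 2

lemma abs_radicand_sub_le {V r : ℝ} (hV : 0 ≤ V) (hVr : V ≤ r) (s G W X : ℝ) :
    |V * G + W + 2 * √V * X - (V + s)| ≤ radicandBound r s G W X := by
  calc |V * G + W + 2 * √V * X - (V + s)| = |V * (G - 1) + (W - s) + 2 * √V * X| := by ring_nf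
    _ ≤ |V * (G - 1)| + |W - s| + |2 * √V * X| := abs_add_three _ _ _
    _ = V * |G - 1| + |W - s| + 2 * √V * |X| := by
        rw [abs_mul, abs_mul, abs_of_nonneg hV, abs_of_nonneg (by positivity : 0 ≤ 2 * √V)]
    _ ≤ radicandBound r s G W X := by unfold radicandBound; gcongr

lemma abs_sum_mul_div_le_sqrt {ι : Type*} [Fintype ι] (u v : ι → ℝ) (m : ℝ) :
    |(∑ i, u i * v i) / m| ≤ √((∑ i, v i ^ 2) / m * ((∑ i, u i ^ 2) / m)) := by
  refine Real.abs_le_sqrt ?_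
  rw [div_pow, div_mul_div_comm, ← sq, mul_comm (∑ i, v i ^ 2)]
  gcongr
  exact Finset.sum_mul_sq_le_sq_mul_sq Finset.univ u v

lemma abs_Lfun_sub_Ltil_le {n p : ℕ} {r : ℝ} (σ : ℝ) (w : Fin n → ℝ) (β lam : Fin p → ℝ)
    (g : Fin n → ℝ) (h : Fin p → ℝ) {v : Fin p → ℝ} (hv : (∑ i, v i ^ 2) / n ≤ r) :
    |Lfun w β lam g h v - Ltil (n := n) σ β lam h v|
      ≤ approxBound r (σ ^ 2) ((∑ j, g j ^ 2) / n) ((∑ j, w j ^ 2) / n) ((∑ j, g j * w j) / n)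
          ((∑ i, h i ^ 2) / n) := by
  have hV : 0 ≤ (∑ i, v i ^ 2) / (n : ℝ) := by positivity
  have hsqrt := (abs_sqrt_sub_sqrt_le_sqrt_abs_sub _ _).trans <| Real.sqrt_le_sqrt <|
    abs_radicand_sub_le hV hv (σ ^ 2) ((∑ j, g j ^ 2) / n) ((∑ j, w j ^ 2) / n)
      ((∑ j, g j * w j) / n)
  have hcs := abs_sum_mul_div_le_sqrt h v n
  unfold Lfun Ltil approxBound
  rw [add_sub_add_right_eq_sub, ← Real.sqrt_div (by positivity : 0 ≤ ∑ i, v i ^ 2)]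
  refine (abs_half_sq_max_sub_half_sq_max_le _ _ _).trans ?_
  rw [abs_of_nonneg (Real.sqrt_nonneg (_ + σ ^ 2))]
  gcongr
  exact hcs.trans (by gcongr)

lemma iSup_abs_Lfun_sub_Ltil_le {n p : ℕ} (K σ : ℝ) (w : Fin n → ℝ) (β lam : Fin p → ℝ)
    (g : Fin n → ℝ) (h : Fin p → ℝ) :
    ⨆ v : {v : Fin p → ℝ // ∑ i, v i ^ 2 ≤ K ^ 2 * (n : ℝ)},
        |Lfun w β lam g h v.1 - Ltil (n := n) σ β lam h v.1|
      ≤ approxBound (K ^ 2) (σ ^ 2) ((∑ j, g j ^ 2) / n) ((∑ j, w j ^ 2) / n)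
          ((∑ j, g j * w j) / n) ((∑ i, h i ^ 2) / n) := by
  have : Nonempty {v : Fin p → ℝ // ∑ i, v i ^ 2 ≤ K ^ 2 * (n : ℝ)} :=
    ⟨0, by simpa using by positivity⟩
  exact ciSup_le fun v => abs_Lfun_sub_Ltil_le σ w β lam g h
    (div_le_of_le_mul₀ n.cast_nonneg (sq_nonneg K) v.2)

end DeterministicBound

/-- Convergence in probability to a constant, for random variables `X i` each defined on its own
space `Ω i`; `MeasureTheory.TendstoInMeasure` requires a common space. -/
def TendstoInProbability {ι E : Type*} [TopologicalSpace E] {Ω : ι → Type*}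
    [∀ i, MeasurableSpace (Ω i)] (l : Filter ι) (P : ∀ i, Measure (Ω i)) (X : ∀ i, Ω i → E)
    (a : E) : Prop :=
  ∀ U ∈ 𝓝 a, Tendsto (fun i => P i {ω | X i ω ∉ U}) l (𝓝 0)

namespace TendstoInProbability

variable {ι E F : Type*} {Ω Ω' : ι → Type*} [∀ i, MeasurableSpace (Ω i)]
  [∀ i, MeasurableSpace (Ω' i)] {l : Filter ι} {P : ∀ i, Measure (Ω i)} {Q : ∀ i, Measure (Ω' i)}

lemma of_dist [PseudoMetricSpace E] {X : ∀ i, Ω i → E} {a : E}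
    (hX : ∀ ε, 0 < ε → Tendsto (fun i => P i {ω | ε ≤ dist (X i ω) a}) l (𝓝 0)) :
    TendstoInProbability l P X a := by
  intro U hU
  obtain ⟨ε, hε, hεU⟩ := Metric.mem_nhds_iff.1 hU
  refine tendsto_of_tendsto_of_tendsto_of_le_of_le tendsto_const_nhds (hX ε hε)
    (fun _ => zero_le) fun i => measure_mono fun ω hω => ?_
  exact not_lt.1 fun hlt => hω (hεU (Metric.mem_ball.2 hlt))

variable [TopologicalSpace E] [TopologicalSpace F]

lemma of_tendsto {x : ι → E} {a : E} (hx : Tendsto x l (𝓝 a)) :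
    TendstoInProbability l P (fun i _ => x i) a := by
  intro U hU
  refine tendsto_const_nhds.congr' ?_
  filter_upwards [hx hU] with i hi
  simp [Set.mem_preimage.1 hi]

lemma prodMk {X : ∀ i, Ω i → E} {Y : ∀ i, Ω i → F} {a : E} {b : F}
    (hX : TendstoInProbability l P X a) (hY : TendstoInProbability l P Y b) :
    TendstoInProbability l P (fun i ω => (X i ω, Y i ω)) (a, b) := by
  intro U hU
  obtain ⟨A, hA, B, hB, hAB⟩ := mem_nhds_prod_iff.1 hU
  have hsum := (hX A hA).add (hY B hB)
  rw [add_zero] at hsum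
  refine tendsto_of_tendsto_of_tendsto_of_le_of_le tendsto_const_nhds hsum
    (fun _ => zero_le) fun i => (measure_mono fun ω hω => ?_).trans (measure_union_le _ _)
  exact not_and_or.1 fun hmem => hω (hAB hmem)

lemma continuousAt_comp {X : ∀ i, Ω i → E} {a : E} {φ : E → F} (hφ : ContinuousAt φ a)
    (hX : TendstoInProbability l P X a) :
    TendstoInProbability l P (fun i ω => φ (X i ω)) (φ a) :=
  fun _ hU => hX _ (hφ hU)

lemma comp_measurePreserving {X : ∀ i, Ω i → E} {a : E} (hX : TendstoInProbability l P X a)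
    {f : ∀ i, Ω' i → Ω i} (hf : ∀ i, MeasurePreserving (f i) (Q i) (P i)) :
    TendstoInProbability l Q (fun i ω => X i (f i ω)) a :=
  fun U hU => tendsto_of_tendsto_of_tendsto_of_le_of_le tendsto_const_nhds (hX U hU)
    (fun _ => zero_le) fun i => (hf i).measure_preimage_le _

lemma tendsto_measure_lt_one [∀ i, IsProbabilityMeasure (P i)] {X Y : ∀ i, Ω i → ℝ} {a b : ℝ}
    (hX : TendstoInProbability l P X a) (hYX : ∀ i ω, Y i ω ≤ X i ω) (hab : a < b) :
    Tendsto (fun i => P i {ω | Y i ω < b}) l (𝓝 1) := by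
  have hlower : Tendsto (fun i => 1 - P i {ω | X i ω ∉ Set.Iio b}) l (𝓝 1) := by
    simpa using ENNReal.Tendsto.sub tendsto_const_nhds (hX _ (Iio_mem_nhds hab))
      (Or.inl ENNReal.one_ne_top)
  refine tendsto_of_tendsto_of_tendsto_of_le_of_le hlower tendsto_const_nhds (fun i => ?_)
    fun i => prob_le_one
  rw [tsub_le_iff_right]
  calc 1 = P i Set.univ := measure_univ.symm
    _ ≤ P i ({ω | Y i ω < b} ∪ {ω | X i ω ∉ Set.Iio b}) := measure_mono fun ω _ =>
        or_iff_not_imp_right.2 fun hω => (hYX i ω).trans_lt (not_not.1 hω)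
    _ ≤ P i {ω | Y i ω < b} + P i {ω | X i ω ∉ Set.Iio b} := measure_union_le _ _

end TendstoInProbability

lemma tendstoInProbability_approxBound {ι : Type*} {Ω : ι → Type*}
    [∀ i, MeasurableSpace (Ω i)] {l : Filter ι} {P : ∀ i, Measure (Ω i)}
    {G W X H : ∀ i, Ω i → ℝ} (r s : ℝ) {m : ℝ}
    (hG : TendstoInProbability l P G 1) (hW : TendstoInProbability l P W s)
    (hX : TendstoInProbability l P X 0) (hH : TendstoInProbability l P H m) :
    TendstoInProbability l P
      (fun i ω => approxBound r s (G i ω) (W i ω) (X i ω) (H i ω)) 0 := by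
  have hcont : Continuous fun q : ℝ × ℝ × ℝ × ℝ =>
      approxBound r s q.1 q.2.1 q.2.2.1 q.2.2.2 := by
    unfold approxBound radicandBound
    fun_prop
  have hlim : approxBound r s 1 s 0 m = 0 := by simp [approxBound, radicandBound]
  simpa only [hlim] using
    (hG.prodMk (hW.prodMk (hX.prodMk hH))).continuousAt_comp hcont.continuousAt

section LawsOfLargeNumbers

variable {ι α : Type*} [MeasurableSpace α] {ν : Measure α} [IsProbabilityMeasure ν] {f : α → ℝ}

lemma measurePreserving_infinitePi_comp {κ : Type*} [Fintype κ] {e : κ → ι}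
    (he : Function.Injective e) :
    MeasurePreserving (fun (ω : ι → α) k => ω (e k))
      (Measure.infinitePi fun _ => ν) (Measure.pi fun _ => ν) where
  measurable := by fun_prop
  map_eq := by rw [Measure.map_infinitePi_infinitePi_of_inj he, Measure.infinitePi_eq_pi]

lemma identDistrib_infinitePi_eval (hf : AEMeasurable f ν) (j : ι) :
    IdentDistrib (fun ω : ι → α => f (ω j)) f (Measure.infinitePi fun _ => ν) ν := by
  have hcoord := measurePreserving_eval_infinitePi (fun _ : ι => ν) j
  have heval : IdentDistrib (Function.eval j) id (Measure.infinitePi fun _ : ι => ν) ν :=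
    ⟨hcoord.aemeasurable, aemeasurable_id, by rw [hcoord.map_eq, Measure.map_id]⟩
  exact heval.comp_of_aemeasurable (hcoord.map_eq.symm ▸ hf)

lemma indepFun_infinitePi_eval (hf : AEMeasurable f ν) {j k : ι} (hjk : j ≠ k) :
    (fun ω : ι → α => f (ω j)) ⟂ᵢ[Measure.infinitePi fun _ => ν] fun ω => f (ω k) := by
  have hcoord (i : ι) := measurePreserving_eval_infinitePi (fun _ : ι => ν) i
  exact ((iIndepFun_infinitePi (P := fun _ : ι => ν) (X := fun _ x => x)
    fun _ => measurable_id).indepFun hjk).comp₀ (hcoord j).aemeasurable (hcoord k).aemeasurable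
    ((hcoord j).map_eq.symm ▸ hf) ((hcoord k).map_eq.symm ▸ hf)

lemma tendstoInMeasure_infinitePi_average (hf : Integrable f ν) :
    TendstoInMeasure (Measure.infinitePi fun _ : ℕ => ν)
      (fun (m : ℕ) ω => (∑ j : Fin m, f (ω j)) / m) atTop (fun _ => ∫ x, f x ∂ν) := by
  have hident (j : ℕ) := identDistrib_infinitePi_eval hf.aemeasurable j
  have hint (j : ℕ) := (hident j).integrable_iff.2 hf
  have hslln := strong_law_ae_real (fun j (ω : ℕ → α) => f (ω j)) (hint 0)
    (fun _ _ hjk => indepFun_infinitePi_eval hf.aemeasurable hjk)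
    fun j => (hident j).trans (hident 0).symm
  rw [(hident 0).integral_eq] at hslln
  refine tendstoInMeasure_of_tendsto_ae (fun m => ?_) ?_
  · simpa only [div_eq_mul_inv] using
      (integrable_finsetSum _ fun (j : Fin m) _ => hint j).aestronglyMeasurable.mul_const _
  · simpa only [Finset.sum_range] using hslln

lemma tendstoInProbability_average {l : Filter ι} {m : ι → ℕ} (hm : Tendsto m l atTop)
    (hf : Integrable f ν) :
    TendstoInProbability l (fun i => Measure.pi fun _ : Fin (m i) => ν)
      (fun i x => (∑ j, f (x j)) / m i) (∫ x, f x ∂ν) := by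
  refine .of_dist fun ε hε => ?_
  have hdist := tendstoInMeasure_iff_dist.1 (tendstoInMeasure_infinitePi_average (ν := ν) hf) ε hε
  have hsum (i : ι) :
      AEMeasurable (fun x : Fin (m i) → α => ∑ j, f (x j)) (Measure.pi fun _ => ν) :=
    Finset.aemeasurable_fun_sum _ fun j _ => hf.aemeasurable.comp_quasiMeasurePreserving
      (Measure.quasiMeasurePreserving_eval (fun _ => ν) j)
  have hnull (i : ι) : NullMeasurableSet
      {x : Fin (m i) → α | ε ≤ dist ((∑ j, f (x j)) / m i) (∫ x, f x ∂ν)}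
      (Measure.pi fun _ => ν) :=
    nullMeasurableSet_le aemeasurable_const (((hsum i).div_const _).dist aemeasurable_const)
  exact (hdist.comp hm).congr fun i =>
    (measurePreserving_infinitePi_comp Fin.val_injective).measure_preimage (hnull i)

lemma variance_pi_sum_mul [Fintype ι] (hf : MemLp f 2 ν) (a : ι → ℝ) :
    Var[fun x : ι → α => ∑ j, a j * f (x j); Measure.pi fun _ => ν]
      = (∑ j, a j ^ 2) * Var[f; ν] := by
  have := variance_sum_pi (μ := fun _ : ι => ν) fun j => hf.const_mul (a j)
  simpa only [Finset.sum_fn, variance_const_mul, Finset.sum_mul] using this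

lemma tendstoInProbability_sum_mul_zero {l : Filter ι} {κ : ι → Type*} [∀ i, Fintype (κ i)]
    (hf : MemLp f 2 ν) (hf0 : ∫ x, f x ∂ν = 0) {a : ∀ i, κ i → ℝ}
    (ha : Tendsto (fun i => ∑ j, a i j ^ 2) l (𝓝 0)) :
    TendstoInProbability l (fun i => Measure.pi fun _ : κ i => ν)
      (fun i x => ∑ j, a i j * f (x j)) 0 := by
  refine .of_dist fun ε hε => ?_
  have hbound : Tendsto (fun i => ENNReal.ofReal ((∑ j, a i j ^ 2) * Var[f; ν] / ε ^ 2))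
      l (𝓝 0) := by
    simpa using ENNReal.tendsto_ofReal ((ha.mul_const Var[f; ν]).div_const (ε ^ 2))
  refine tendsto_of_tendsto_of_tendsto_of_le_of_le tendsto_const_nhds hbound
    (fun _ => zero_le) fun i => ?_
  have hterm (j : κ i) : MemLp (fun x : κ i → α => a i j * f (x j)) 2 (Measure.pi fun _ => ν) :=
    (hf.comp_measurePreserving (measurePreserving_eval (fun _ => ν) j)).const_mul (a i j)
  have hmean : ∫ x, ∑ j, a i j * f (x j) ∂(Measure.pi fun _ : κ i => ν) = 0 := by
    rw [integral_finsetSum _ fun j _ => (hterm j).integrable one_le_two]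
    refine Finset.sum_eq_zero fun j _ => ?_
    rw [integral_const_mul, integral_comp_eval (μ := fun _ => ν) hf.1, hf0, mul_zero]
  simpa only [Real.dist_eq, hmean, variance_pi_sum_mul hf] using
    meas_ge_le_variance_div_sq (memLp_finsetSum Finset.univ fun j _ => hterm j) hε

end LawsOfLargeNumbers

lemma tendstoInProbability_inner_div {ι : Type*} {l : Filter ι} {μ : Measure ℝ}
    [IsProbabilityMeasure μ] (hμ : MemLp id 2 μ) (hμ0 : ∫ x, x ∂μ = 0) {n : ι → ℕ}
    (hn : Tendsto n l atTop) {w : ∀ i, Fin (n i) → ℝ} {s : ℝ}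
    (hw : Tendsto (fun i => (∑ j, w i j ^ 2) / n i) l (𝓝 s)) :
    TendstoInProbability l (fun i => Measure.pi fun _ : Fin (n i) => μ)
      (fun i g => (∑ j, g j * w i j) / n i) 0 := by
  have ha : Tendsto (fun i => ∑ j, (w i j / n i) ^ 2) l (𝓝 0) := by
    have := hw.div_atTop (tendsto_natCast_atTop_atTop.comp hn)
    simpa only [div_pow, ← Finset.sum_div, div_div, ← sq, Function.comp_apply] using this
  simpa only [id, Finset.sum_div, mul_div_assoc, mul_comm (w _ _ / _)] using
    tendstoInProbability_sum_mul_zero hμ hμ0 ha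

lemma tendstoInProbability_sum_sq_div {ν : Measure ℝ} [IsProbabilityMeasure ν]
    (hν : MemLp id 2 ν) {n : ℕ → ℕ} {δ : ℝ} (hδ : δ ≠ 0)
    (hn : Tendsto (fun p => (n p : ℝ) / p) atTop (𝓝 δ)) :
    TendstoInProbability atTop (fun p => Measure.pi fun _ : Fin p => ν)
      (fun p h => (∑ i, h i ^ 2) / n p) ((∫ x, x ^ 2 ∂ν) * δ⁻¹) := by
  have hratio : Tendsto (fun p : ℕ => (p : ℝ) / n p) atTop (𝓝 δ⁻¹) := by
    simpa only [inv_div] using hn.inv₀ hδ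
  have havg : TendstoInProbability atTop (fun p => Measure.pi fun _ : Fin p => ν)
      (fun p h => (∑ i, h i ^ 2) / (p : ℝ)) (∫ x, x ^ 2 ∂ν) :=
    tendstoInProbability_average (m := fun p => p) tendsto_id hν.integrable_sq
  have hprod := (havg.prodMk (.of_tendsto hratio)).continuousAt_comp continuous_mul.continuousAt
  have hsplit (p : ℕ) (h : Fin p → ℝ) :
      (∑ i, h i ^ 2) / (p : ℝ) * (p / n p) = (∑ i, h i ^ 2) / n p := by
    rcases p.eq_zero_or_pos with rfl | hp
    · simp
    · exact div_mul_div_cancel₀ (by positivity)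
  simpa only [hsplit] using hprod

theorem statement17_general {μ ν : Measure ℝ} [IsProbabilityMeasure μ] [IsProbabilityMeasure ν]
    (hμ : MemLp id 2 μ) (hμ_mean : ∫ x, x ∂μ = 0) (hμ_var : Var[id; μ] = 1) (hν : MemLp id 2 ν)
    {δ : ℝ} (hδ : 0 < δ) (σw K : ℝ) {n : ℕ → ℕ}
    (hn : Tendsto (fun p => (n p : ℝ) / p) atTop (𝓝 δ))
    {w : (p : ℕ) → Fin (n p) → ℝ}
    (hw : Tendsto (fun p => (∑ j, w p j ^ 2) / (n p : ℝ)) atTop (𝓝 (σw ^ 2)))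
    (β lam : (p : ℕ) → Fin p → ℝ) {ε : ℝ} (hε : 0 < ε) :
    Tendsto (fun p =>
      ((Measure.pi fun _ : Fin (n p) => μ).prod (Measure.pi fun _ : Fin p => ν))
        {gh : (Fin (n p) → ℝ) × (Fin p → ℝ) |
          (⨆ v : {v : Fin p → ℝ // ∑ i, v i ^ 2 ≤ K ^ 2 * (n p : ℝ)},
            |Lfun (w p) (β p) (lam p) gh.1 gh.2 v.1
              - Ltil (n := n p) σw (β p) (lam p) gh.2 v.1|) < ε})
      atTop (𝓝 1) := by
  have hn_atTop : Tendsto n atTop atTop :=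
    tendsto_natCast_atTop_iff.1 (tendsto_natCast_atTop_atTop.num hδ hn)
  have hμ_sq : ∫ x, x ^ 2 ∂μ = 1 := by
    rw [← hμ_var, variance_of_integral_eq_zero aemeasurable_id hμ_mean]; rfl
  have hG : TendstoInProbability atTop (fun p => Measure.pi fun _ : Fin (n p) => μ)
      (fun p g => (∑ j, g j ^ 2) / (n p : ℝ)) 1 := by
    simpa only [id, hμ_sq] using tendstoInProbability_average hn_atTop hμ.integrable_sq
  have hX := tendstoInProbability_inner_div hμ hμ_mean hn_atTop hw
  have hH := tendstoInProbability_sum_sq_div hν hδ.ne' hn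
  have hbound := tendstoInProbability_approxBound (K ^ 2) (σw ^ 2)
    (hG.comp_measurePreserving fun _ => measurePreserving_fst) (.of_tendsto hw)
    (hX.comp_measurePreserving fun _ => measurePreserving_fst)
    (hH.comp_measurePreserving fun _ => measurePreserving_snd)
  exact hbound.tendsto_measure_lt_one
    (fun p gh => iSup_abs_Lfun_sub_Ltil_le K σw (w p) (β p) (lam p) gh.1 gh.2) hε

theorem statement17
    (δ σw K : ℝ) (hδ : 0 < δ) (hσw : 0 ≤ σw) (hK : 0 < K)
    (n : ℕ → ℕ) (hn : Tendsto (fun p => (n p : ℝ) / (p : ℝ)) atTop (𝓝 δ))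
    (w : (p : ℕ) → Fin (n p) → ℝ)
    (hw : Tendsto (fun p => (∑ j, (w p j) ^ 2) / (n p : ℝ)) atTop (𝓝 (σw ^ 2)))
    (β : (p : ℕ) → Fin p → ℝ) (C : ℝ) (hβ : ∀ p : ℕ, (∑ i, (β p i) ^ 2) / (p : ℝ) ≤ C)
    (lam : (p : ℕ) → Fin p → ℝ)
    (hlam : ∀ p i, 0 ≤ lam p i) (hlamm : ∀ p, Monotone (lam p)) :
    ∃ c : ℝ, 0 < c ∧ ∀ ε : ℝ, 0 < ε → ε < 1 / 2 →
      Tendsto (fun p =>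
        ((Measure.pi fun _ : Fin (n p) => gaussianReal 0 1).prod
          (Measure.pi fun _ : Fin p => gaussianReal 0 1))
        {gh : (Fin (n p) → ℝ) × (Fin p → ℝ) |
          (⨆ v : {v : Fin p → ℝ // ∑ i, (v i) ^ 2 ≤ K ^ 2 * (n p : ℝ)},
            |Lfun (w p) (β p) (lam p) gh.1 gh.2 v.1
              - Ltil (n := n p) σw (β p) (lam p) gh.2 v.1|) < c * ε})
        atTop (𝓝 (1 : ENNReal)) :=
  ⟨1, one_pos, fun ε hε _ => statement17_general (memLp_id_gaussianReal' 2 (by simp))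
    integral_id_gaussianReal (by simp) (memLp_id_gaussianReal' 2 (by simp)) hδ σw K hn hw β lam
    (by simpa using hε)⟩
end
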